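/- There is a universal constant c > 0 such that the following holds. Let G be the ℓ×ℓ grid, let δ ≥ 1 and d ≥ 1 be integers, and let M be a set of demand pairs, with all sources distinct and all destinations distinct, such that every source s of M lies at distance at most δ from the boundary Γ(G) and every destination t of M satisfies d(t,t̃) < 2d, where for a vertex v, ṽ denotes a fixed vertex of Γ(G) at minimum distance from v. Let M̂ = {(s̃,t̃) : (s,t) ∈ M}. Then OPT(G,M̂) ≥ c·OPT(G,M)/(d+δ). -/

import Mathlib

/-! The pairs routed by an optimal solution for `M` are thinned out so that the survivors can be
extended to the boundary. Let `D = δ + 2d`. Each terminal `v` is joined to `tilde v` by a straight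
segment of at most `D` edges, since a nearest boundary vertex lies in the row or column of `v`
(`tilde_cases`). Two such segments can only meet if they end in the same boundary vertex
(`tilde_eq_of_box_meet`).

Attach to each routed pair `m` the set `B m`, the union of the two crosses of radius `D` centred at
`tilde s` and `tilde t`; it has at most `8D + 4` vertices, contains both segments of `m`, and
contains every terminal whose segment meets one of them. Since the paths of the solution are
disjoint, `B m` is hit by at most `8D + 4` of them. A relation of out-degree at most `Δ` on `k`
elements has an independent set of size at least `k / (2Δ + 1)` (`exists_independent`), so
`Ω(k / D)` pairs can be kept such that no kept path hits the set `B` of another kept pair.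
The kept paths, extended by their segments, are then pairwise disjoint. -/

open Finset

abbrev Vtx := ℕ × ℕ
abbrev DPair := Vtx × Vtx

/-- The grid graph on rows `r₁..r₂` and columns `c₁..c₂` (vertices outside are isolated). -/
def rectGrid (r₁ r₂ c₁ c₂ : ℕ) : SimpleGraph Vtx :=
  SimpleGraph.fromRel (fun u v =>
    r₁ ≤ u.1 ∧ u.1 ≤ r₂ ∧ c₁ ≤ u.2 ∧ u.2 ≤ c₂ ∧
    r₁ ≤ v.1 ∧ v.1 ≤ r₂ ∧ c₁ ≤ v.2 ∧ v.2 ≤ c₂ ∧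
    ((u.1 = v.1 ∧ u.2 + 1 = v.2) ∨ (u.2 = v.2 ∧ u.1 + 1 = v.1)))

/-- The ℓ×ℓ grid graph. -/
def gridG (ℓ : ℕ) : SimpleGraph Vtx := rectGrid 1 ℓ 1 ℓ

/-- The demand pairs of `M` can be simultaneously routed via node-disjoint paths in `G`. -/
def NodeDisjointRoutable {V : Type*} (G : SimpleGraph V) (M : Finset (V × V)) : Prop :=
  ∃ P : ∀ m : {m // m ∈ M}, G.Walk m.val.1 m.val.2,
    (∀ m, (P m).IsPath) ∧
    ∀ m m' : {m // m ∈ M}, m ≠ m' → ∀ x, x ∈ (P m).support → x ∉ (P m').support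

def OnTopRow (ℓ : ℕ) (v : Vtx) : Prop := v.1 = 1 ∧ 1 ≤ v.2 ∧ v.2 ≤ ℓ

def OnBoundary (ℓ : ℕ) (v : Vtx) : Prop :=
  1 ≤ v.1 ∧ v.1 ≤ ℓ ∧ 1 ≤ v.2 ∧ v.2 ≤ ℓ ∧ (v.1 = 1 ∨ v.1 = ℓ ∨ v.2 = 1 ∨ v.2 = ℓ)

def DistinctSources (M : Finset DPair) : Prop := ∀ m ∈ M, ∀ m' ∈ M, m.1 = m'.1 → m = m'
def DistinctDests (M : Finset DPair) : Prop := ∀ m ∈ M, ∀ m' ∈ M, m.2 = m'.2 → m = m'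

noncomputable def lg (n : ℕ) : ℝ := Real.logb 2 n

def IsIntervalIn (W : ℕ) (I : Finset ℕ) : Prop :=
  ∃ a b : ℕ, 1 ≤ a ∧ a ≤ b ∧ b ≤ W ∧ I = Finset.Icc a b

def IntSeparated (d : ℕ) (I J : Finset ℕ) : Prop :=
  ∀ i ∈ I, ∀ j ∈ J, (d : ℤ) < |(i : ℤ) - (j : ℤ)|

def IsCanonicalIntervals (W d : ℕ) (Is : Finset (Finset ℕ)) : Prop :=
  (∀ I ∈ Is, IsIntervalIn W I ∧ I.card = d) ∧
    ∀ I ∈ Is, ∀ J ∈ Is, I ≠ J → IntSeparated d I J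

abbrev SquareSpec := Finset ℕ × Finset ℕ

def memSquare (v : Vtx) (Q : SquareSpec) : Prop := v.1 ∈ Q.1 ∧ v.2 ∈ Q.2

instance (v : Vtx) (Q : SquareSpec) : Decidable (memSquare v Q) := by
  unfold memSquare; infer_instance

def IsCanonicalSquares (W d : ℕ) (Qs : Finset SquareSpec) : Prop :=
  ∃ I₁ I₂ : Finset (Finset ℕ),
    IsCanonicalIntervals W d I₁ ∧ IsCanonicalIntervals W d I₂ ∧ Qs = I₁ ×ˢ I₂

/-- The number of sources of `M` lying on the shadow of the square `Q` with respect to `M`,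
i.e. on the shortest sub-path of the top row containing all sources of pairs of `M` whose
destination lies in `Q`. -/
def shadowCount (M : Finset DPair) (Q : SquareSpec) : ℕ :=
  (M.filter (fun m => ∃ m₁ ∈ M, memSquare m₁.2 Q ∧ ∃ m₂ ∈ M, memSquare m₂.2 Q ∧
      m₁.1.2 ≤ m.1.2 ∧ m.1.2 ≤ m₂.1.2)).card

/-- The square `Q` (of side `d`) has the β-shadow property with respect to `M`. -/
def HasShadowProp (β : ℝ) (d : ℕ) (M : Finset DPair) (Q : SquareSpec) : Prop :=
  (shadowCount M Q : ℝ) ≤ β * d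

/-- Optimal value of the node-disjoint paths problem. -/
noncomputable def OPTn {V : Type*} (G : SimpleGraph V) (M : Finset (V × V)) : ℕ :=
  sSup {k | ∃ M' ⊆ M, M'.card = k ∧ NodeDisjointRoutable G M'}

def InGrid (ℓ : ℕ) (v : Vtx) : Prop := 1 ≤ v.1 ∧ v.1 ≤ ℓ ∧ 1 ≤ v.2 ∧ v.2 ≤ ℓ

/-! ### Independent sets in relations of bounded out-degree -/

/-- Some element has in-degree at most the average out-degree, so at most `2Δ` elements other than
itself are related to it in either direction; select it, discard those, and recurse. -/
lemma exists_independent {α : Type*} [DecidableEq α] (R : α → α → Prop) [DecidableRel R] (Δ : ℕ) :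
    ∀ (n : ℕ) (S : Finset α), S.card = n → (∀ a ∈ S, (S.filter (fun b => R a b)).card ≤ Δ) →
      ∃ T ⊆ S, (∀ a ∈ T, ∀ b ∈ T, a ≠ b → ¬ R a b) ∧ S.card ≤ (2 * Δ + 1) * T.card := by
  intro n
  induction n using Nat.strong_induction_on with
  | _ n ih =>
  intro S hn hS
  rcases S.eq_empty_or_nonempty with rfl | hne
  · exact ⟨∅, by simp, by simp, by simp⟩
  have hin : ∃ b ∈ S, (S.filter (fun a => R a b)).card ≤ Δ := by
    by_contra! hcon
    have h1 : ∑ a ∈ S, (S.filter (fun b => R a b)).card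
        = ∑ b ∈ S, (S.filter (fun a => R a b)).card :=
      Finset.sum_card_bipartiteAbove_eq_sum_card_bipartiteBelow R
    have h2 := Finset.sum_le_sum hS
    have h3 := Finset.sum_lt_sum_of_nonempty hne hcon
    omega
  obtain ⟨v, hv, hvin⟩ := hin
  set N : Finset α := S.filter (fun b => R v b) ∪ S.filter (fun a => R a v) ∪ {v} with hN
  have hNcard : N.card ≤ 2 * Δ + 1 := by
    have h1 := Finset.card_union_le (S.filter (fun b => R v b) ∪ S.filter (fun a => R a v)) {v}
    have h2 := Finset.card_union_le (S.filter (fun b => R v b)) (S.filter (fun a => R a v))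
    have h3 := hS v hv
    rw [Finset.card_singleton, ← hN] at h1
    omega
  have hvN : v ∈ N := by simp [hN]
  have hlt : (S \ N).card < n := by
    rw [← hn]
    refine Finset.card_lt_card ⟨Finset.sdiff_subset, fun h => ?_⟩
    exact (Finset.mem_sdiff.1 (h hv)).2 hvN
  obtain ⟨T, hTS, hT, hTcard⟩ := ih _ hlt (S \ N) rfl (fun a ha =>
    (Finset.card_le_card (Finset.filter_subset_filter _ Finset.sdiff_subset)).trans
      (hS a (Finset.mem_sdiff.1 ha).1))
  have hvT : v ∉ T := fun h => (Finset.mem_sdiff.1 (hTS h)).2 hvN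
  have hTv : ∀ b ∈ T, ¬ R v b ∧ ¬ R b v := by
    intro b hb
    have := Finset.mem_sdiff.1 (hTS hb)
    have h2 := this.2
    simp only [hN, Finset.mem_union, Finset.mem_filter, this.1, true_and] at h2
    tauto
  refine ⟨insert v T, ?_, ?_, ?_⟩
  · intro x hx
    rcases Finset.mem_insert.1 hx with rfl | hx
    · exact hv
    · exact (Finset.mem_sdiff.1 (hTS hx)).1
  · intro a ha b hb hab
    rcases Finset.mem_insert.1 ha with ha | ha <;> rcases Finset.mem_insert.1 hb with hb | hb
    · exact absurd (ha.trans hb.symm) hab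
    · exact ha ▸ (hTv b hb).1
    · exact hb ▸ (hTv a ha).2
    · exact hT a ha b hb hab
  · rw [Finset.card_insert_of_notMem hvT]
    have := Finset.card_le_card_sdiff_add_card (s := S) (t := N)
    nlinarith

/-! ### Distances in the grid -/

/-- The `L1` distance on `ℕ × ℕ`; in each coordinate one of the two truncated differences is `0`. -/
def l1 (u v : Vtx) : ℕ := (u.1 - v.1) + (v.1 - u.1) + ((u.2 - v.2) + (v.2 - u.2))

/-- `x` lies in the bounding box of `u` and `v`. -/
def InBox (u v x : Vtx) : Prop :=
  min u.1 v.1 ≤ x.1 ∧ x.1 ≤ max u.1 v.1 ∧ min u.2 v.2 ≤ x.2 ∧ x.2 ≤ max u.2 v.2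

lemma grid_adj {ℓ : ℕ} {u v : Vtx} :
    (gridG ℓ).Adj u v ↔ InGrid ℓ u ∧ InGrid ℓ v ∧ l1 u v = 1 := by
  obtain ⟨a, b⟩ := u
  obtain ⟨a', b'⟩ := v
  simp only [gridG, rectGrid, SimpleGraph.fromRel_adj, InGrid, l1, ne_eq, Prod.mk.injEq]
  omega

lemma box_walk (ℓ : ℕ) : ∀ (n : ℕ) (u v : Vtx), InGrid ℓ u → InGrid ℓ v → l1 u v = n →
    ∃ p : (gridG ℓ).Walk u v, p.length = n ∧ ∀ x ∈ p.support, InBox u v x := by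
  intro n
  induction n with
  | zero =>
    intro u v hu hv h
    have : u = v := by
      simp only [l1] at h
      ext <;> omega
    subst this
    refine ⟨SimpleGraph.Walk.nil, rfl, ?_⟩
    intro x hx
    simp only [SimpleGraph.Walk.support_nil, List.mem_singleton] at hx
    subst hx
    simp [InBox]
  | succ n ih =>
    intro u v hu hv h
    -- a neighbour of `u` one step closer to `v`
    have hw : ∃ w : Vtx, InGrid ℓ w ∧ l1 u w = 1 ∧ l1 w v = n ∧ InBox u v w := by
      obtain ⟨a, b⟩ := u
      obtain ⟨a', b'⟩ := v
      simp only [l1, InGrid] at h hu hv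
      by_cases h1 : a < a'
      · exact ⟨(a + 1, b), by simp only [l1, InGrid, InBox]; omega⟩
      by_cases h2 : a' < a
      · exact ⟨(a - 1, b), by simp only [l1, InGrid, InBox]; omega⟩
      by_cases h3 : b < b'
      · exact ⟨(a, b + 1), by simp only [l1, InGrid, InBox]; omega⟩
      · exact ⟨(a, b - 1), by simp only [l1, InGrid, InBox]; omega⟩
    obtain ⟨w, hwg, huw, hwv, hbox⟩ := hw
    obtain ⟨p, hp, hps⟩ := ih w v hwg hv hwv
    refine ⟨SimpleGraph.Walk.cons (grid_adj.2 ⟨hu, hwg, huw⟩) p, by simp [hp], ?_⟩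
    intro x hx
    rw [SimpleGraph.Walk.support_cons, List.mem_cons] at hx
    rcases hx with rfl | hx
    · simp [InBox]
    · have := hps x hx
      simp only [InBox] at this hbox ⊢
      omega

lemma l1_le_length {ℓ : ℕ} {u v : Vtx} (p : (gridG ℓ).Walk u v) : l1 u v ≤ p.length := by
  induction p with
  | nil => simp [l1]
  | cons h p ih =>
    have := (grid_adj.1 h).2.2
    rw [SimpleGraph.Walk.length_cons]
    simp only [l1] at *
    omega

lemma grid_dist {ℓ : ℕ} {u v : Vtx} (hu : InGrid ℓ u) (hv : InGrid ℓ v) :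
    (gridG ℓ).dist u v = l1 u v := by
  obtain ⟨p, hp, -⟩ := box_walk ℓ _ u v hu hv rfl
  refine le_antisymm (hp ▸ SimpleGraph.dist_le p) ?_
  obtain ⟨q, hq⟩ := p.reachable.exists_walk_length_eq_dist
  exact hq ▸ l1_le_length q

/-! ### Segments to the boundary -/

/-- `u` is a boundary vertex of the `ℓ × ℓ` grid nearest to `v`. -/
def IsNearest (ℓ : ℕ) (v u : Vtx) : Prop :=
  OnBoundary ℓ u ∧ ∀ b, OnBoundary ℓ b → (gridG ℓ).dist v u ≤ (gridG ℓ).dist v b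

lemma OnBoundary.inGrid {ℓ : ℕ} {v : Vtx} (h : OnBoundary ℓ v) : InGrid ℓ v :=
  ⟨h.1, h.2.1, h.2.2.1, h.2.2.2.1⟩

/-- A nearest boundary vertex is the orthogonal projection to one of the four sides, and that side
is at least as near as the other three. -/
lemma tilde_cases {ℓ : ℕ} {v u : Vtx} (hv : InGrid ℓ v) (h : IsNearest ℓ v u) :
    (u.1 = 1 ∧ u.2 = v.2 ∧ v.1 ≤ v.2 ∧ v.1 + v.2 ≤ ℓ + 1 ∧ 2 * v.1 ≤ ℓ + 1) ∨
    (u.1 = ℓ ∧ u.2 = v.2 ∧ v.2 ≤ v.1 ∧ ℓ + 1 ≤ v.1 + v.2 ∧ ℓ + 1 ≤ 2 * v.1) ∨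
    (u.2 = 1 ∧ u.1 = v.1 ∧ v.2 ≤ v.1 ∧ v.1 + v.2 ≤ ℓ + 1 ∧ 2 * v.2 ≤ ℓ + 1) ∨
    (u.2 = ℓ ∧ u.1 = v.1 ∧ v.1 ≤ v.2 ∧ ℓ + 1 ≤ v.1 + v.2 ∧ ℓ + 1 ≤ 2 * v.2) := by
  obtain ⟨hu, hmin⟩ := h
  have key : ∀ b, OnBoundary ℓ b → l1 v u ≤ l1 v b := by
    intro b hb
    rw [← grid_dist hv hu.inGrid, ← grid_dist hv hb.inGrid]
    exact hmin b hb
  simp only [InGrid] at hv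
  have h1 := key (1, v.2) (by simp [OnBoundary]; omega)
  have h2 := key (ℓ, v.2) (by simp [OnBoundary]; omega)
  have h3 := key (v.1, 1) (by simp [OnBoundary]; omega)
  have h4 := key (v.1, ℓ) (by simp [OnBoundary]; omega)
  have e1 : l1 v (1, v.2) = v.1 - 1 := by simp only [l1]; omega
  have e2 : l1 v (ℓ, v.2) = ℓ - v.1 := by simp only [l1]; omega
  have e3 : l1 v (v.1, 1) = v.2 - 1 := by simp only [l1]; omega
  have e4 : l1 v (v.1, ℓ) = ℓ - v.2 := by simp only [l1]; omega
  rw [e1] at h1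
  rw [e2] at h2
  rw [e3] at h3
  rw [e4] at h4
  clear e1 e2 e3 e4 hmin key
  obtain ⟨-, -, -, -, hu⟩ := hu
  simp only [l1] at h1 h2 h3 h4
  rcases hu with hu | hu | hu | hu
  · refine Or.inl ⟨hu, ?_, ?_, ?_, ?_⟩ <;> omega
  · refine Or.inr (Or.inl ⟨hu, ?_, ?_, ?_, ?_⟩) <;> omega
  · refine Or.inr (Or.inr (Or.inl ⟨hu, ?_, ?_, ?_, ?_⟩)) <;> omega
  · refine Or.inr (Or.inr (Or.inr ⟨hu, ?_, ?_, ?_, ?_⟩)) <;> omega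

/-- If the segments of `v` and `w` meet, then `v = w` or both end in one vertex: segments to different
sides can only meet on a diagonal or midline of the grid, where both must start. -/
lemma tilde_eq_of_box_meet {ℓ : ℕ} {v u w z x : Vtx} (hv : InGrid ℓ v) (hw : InGrid ℓ w)
    (hu : IsNearest ℓ v u) (hz : IsNearest ℓ w z) (h1 : InBox v u x) (h2 : InBox w z x) :
    v = w ∨ u = z := by
  have hub := hu.1.inGrid
  have hzb := hz.1.inGrid
  have a := tilde_cases hv hu
  have b := tilde_cases hw hz
  obtain ⟨v1, v2⟩ := v
  obtain ⟨w1, w2⟩ := w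
  obtain ⟨u1, u2⟩ := u
  obtain ⟨z1, z2⟩ := z
  simp only [InGrid, InBox, Prod.mk.injEq] at *
  rcases a with a | a | a | a <;> rcases b with b | b | b | b <;> omega

/-- The cross of radius `D` centred at `u` (cut off at `0`). -/
def cross (D : ℕ) (u : Vtx) : Finset Vtx :=
  (Finset.Icc (u.1 - D) (u.1 + D)) ×ˢ {u.2} ∪ {u.1} ×ˢ (Finset.Icc (u.2 - D) (u.2 + D))

lemma card_cross (D : ℕ) (u : Vtx) : (cross D u).card ≤ 4 * D + 2 := by
  refine (Finset.card_union_le _ _).trans ?_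
  simp only [Finset.card_product, Finset.card_singleton, Nat.card_Icc]
  omega

lemma box_subset_cross {ℓ D : ℕ} {v u x : Vtx} (hv : InGrid ℓ v) (hu : IsNearest ℓ v u)
    (hD : (gridG ℓ).dist v u ≤ D) (hx : InBox v u x) : x ∈ cross D u := by
  rw [grid_dist hv hu.1.inGrid] at hD
  have a := tilde_cases hv hu
  simp only [cross, Finset.mem_union, Finset.mem_product, Finset.mem_Icc, Finset.mem_singleton]
  simp only [l1, InBox] at *
  omega

lemma inBox_left (u v : Vtx) : InBox u v u := by simp [InBox]

/-! ### The optimal value -/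

lemma bddAbove_opt {V : Type*} (G : SimpleGraph V) (M : Finset (V × V)) :
    BddAbove {k | ∃ M' ⊆ M, M'.card = k ∧ NodeDisjointRoutable G M'} := by
  refine ⟨M.card, ?_⟩
  rintro k ⟨M', h, rfl, -⟩
  exact Finset.card_le_card h

lemma exists_opt {V : Type*} (G : SimpleGraph V) (M : Finset (V × V)) :
    ∃ M' ⊆ M, M'.card = OPTn G M ∧ NodeDisjointRoutable G M' :=
  Nat.sSup_mem (s := {k | ∃ M' ⊆ M, M'.card = k ∧ NodeDisjointRoutable G M'})
    ⟨0, ∅, by simp, by simp, fun m => absurd m.2 (Finset.notMem_empty _),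
      fun m => absurd m.2 (Finset.notMem_empty _), fun m => absurd m.2 (Finset.notMem_empty _)⟩ (bddAbove_opt G M)

lemma le_opt {V : Type*} {G : SimpleGraph V} {M M' : Finset (V × V)} (h : M' ⊆ M)
    (hr : NodeDisjointRoutable G M') : M'.card ≤ OPTn G M :=
  le_csSup (bddAbove_opt G M) ⟨M', h, rfl, hr⟩

/-- The counting form of the result. -/
lemma opt_le {ℓ D : ℕ} {M : Finset DPair} (hM : ∀ p ∈ M, InGrid ℓ p.1 ∧ InGrid ℓ p.2)
    (tilde : Vtx → Vtx)
    (hnear : ∀ p ∈ M, IsNearest ℓ p.1 (tilde p.1) ∧ IsNearest ℓ p.2 (tilde p.2))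
    (hD : ∀ p ∈ M, (gridG ℓ).dist p.1 (tilde p.1) ≤ D ∧ (gridG ℓ).dist p.2 (tilde p.2) ≤ D) :
    OPTn (gridG ℓ) M ≤ (2 * (8 * D + 4) + 1) *
      OPTn (gridG ℓ) (M.image (fun p => (tilde p.1, tilde p.2))) := by
  classical
  obtain ⟨M', hM', hcard, P, -, hdisj⟩ := exists_opt (gridG ℓ) M
  -- `On m x`: the path of the optimal solution routing `m` visits `x`
  let On : DPair → Vtx → Prop := fun m x => ∃ h : m ∈ M', x ∈ (P ⟨m, h⟩).support
  have On_inj : ∀ m m' x, On m x → On m' x → m = m' := by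
    rintro m m' x ⟨h, hx⟩ ⟨h', hx'⟩
    by_contra hne
    exact hdisj ⟨m, h⟩ ⟨m', h'⟩ (fun e => hne (congrArg Subtype.val e)) x hx hx'
  let B : DPair → Finset Vtx := fun m => cross D (tilde m.1) ∪ cross D (tilde m.2)
  have hB : ∀ m, (B m).card ≤ 8 * D + 4 := by
    intro m
    have := Finset.card_union_le (cross D (tilde m.1)) (cross D (tilde m.2))
    have h1 := card_cross D (tilde m.1)
    have h2 := card_cross D (tilde m.2)
    simp only [B]
    omega
  obtain ⟨T, hTM, hind, hTcard⟩ := exists_independent (fun m m' => ∃ x ∈ B m, On m' x)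
    (8 * D + 4) _ M' rfl (by
      intro m hm
      refine le_trans ?_ (hB m)
      refine Finset.card_le_card_of_forall_subsingleton (fun m' x => On m' x) ?_ ?_
      · intro m' hm'
        exact (Finset.mem_filter.1 hm').2
      · rintro x - m₁ ⟨-, h₁⟩ m₂ ⟨-, h₂⟩
        exact On_inj _ _ x h₁ h₂)
  have hsrc : ∀ m ∈ M', On m m.1 := fun m hm => ⟨hm, SimpleGraph.Walk.start_mem_support _⟩
  have hdst : ∀ m ∈ M', On m m.2 := fun m hm => ⟨hm, SimpleGraph.Walk.end_mem_support _⟩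
  -- `End m v`: `v` is one of the two terminals of `m`
  let End : DPair → Vtx → Prop := fun m v => v = m.1 ∨ v = m.2
  have hEnd : ∀ m ∈ M', ∀ v, End m v →
      InGrid ℓ v ∧ IsNearest ℓ v (tilde v) ∧ (gridG ℓ).dist v (tilde v) ≤ D ∧ On m v ∧
        cross D (tilde v) ⊆ B m := by
    rintro m hm v (rfl | rfl)
    · exact ⟨(hM m (hM' hm)).1, (hnear m (hM' hm)).1, (hD m (hM' hm)).1, hsrc m hm,
        Finset.subset_union_left⟩
    · exact ⟨(hM m (hM' hm)).2, (hnear m (hM' hm)).2, (hD m (hM' hm)).2, hdst m hm,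
        Finset.subset_union_right⟩
  -- terminals of distinct selected pairs have distinct projections
  have hproj : ∀ m ∈ T, ∀ m' ∈ T, m ≠ m' → ∀ v w, End m v → End m' w → tilde v ≠ tilde w := by
    intro m hm m' hm' hne v w hv hw e
    obtain ⟨-, -, -, -, hsub⟩ := hEnd m (hTM hm) v hv
    obtain ⟨hg, hn, hd, hon, -⟩ := hEnd m' (hTM hm') w hw
    refine hind m hm m' hm' hne ⟨w, hsub ?_, hon⟩
    rw [e]
    exact box_subset_cross hg hn hd (inBox_left _ _)
  -- the vertex set of the extended path of `m`
  let Ext : DPair → Vtx → Prop := fun m x => On m x ∨ ∃ v, End m v ∧ InBox v (tilde v) x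
  have hmix : ∀ m ∈ T, ∀ m' ∈ T, m ≠ m' → ∀ x v, End m v → InBox v (tilde v) x → ¬ On m' x := by
    intro m hm m' hm' hne x v hv hx hon
    obtain ⟨hg, hn, hd, -, hsub⟩ := hEnd m (hTM hm) v hv
    exact hind m hm m' hm' hne ⟨x, hsub (box_subset_cross hg hn hd hx), hon⟩
  have hExt : ∀ m ∈ T, ∀ m' ∈ T, m ≠ m' → ∀ x, Ext m x → ¬ Ext m' x := by
    rintro m hm m' hm' hne x (hx | ⟨v, hv, hx⟩) (hx' | ⟨w, hw, hx'⟩)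
    · exact hne (On_inj m m' x hx hx')
    · exact hmix m' hm' m hm hne.symm x w hw hx' hx
    · exact hmix m hm m' hm' hne x v hv hx hx'
    · obtain ⟨hg, hn, -⟩ := hEnd m (hTM hm) v hv
      obtain ⟨hg', hn', -⟩ := hEnd m' (hTM hm') w hw
      have hne' := hproj m hm m' hm' hne v w hv hw
      rcases tilde_eq_of_box_meet hg hg' hn hn' hx hx' with e | e
      · exact hne' (congrArg tilde e)
      · exact hne' e
  have hwalk : ∀ m ∈ T, ∃ q : (gridG ℓ).Walk (tilde m.1) (tilde m.2),
      q.IsPath ∧ ∀ x ∈ q.support, Ext m x := by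
    intro m hm
    obtain ⟨hg, hn, -⟩ := hEnd m (hTM hm) m.1 (Or.inl rfl)
    obtain ⟨hg', hn', -⟩ := hEnd m (hTM hm) m.2 (Or.inr rfl)
    obtain ⟨p, -, hp⟩ := box_walk ℓ _ m.1 (tilde m.1) hg hn.1.inGrid rfl
    obtain ⟨r, -, hr⟩ := box_walk ℓ _ m.2 (tilde m.2) hg' hn'.1.inGrid rfl
    let q := (p.reverse.append (P ⟨m, hTM hm⟩)).append r
    refine ⟨q.bypass, q.bypass_isPath, fun x hx => ?_⟩
    have hx := q.support_bypass_subset_support hx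
    simp only [q, SimpleGraph.Walk.mem_support_append_iff, SimpleGraph.Walk.support_reverse,
      List.mem_reverse] at hx
    rcases hx with (hx | hx) | hx
    · exact Or.inr ⟨m.1, Or.inl rfl, hp x hx⟩
    · exact Or.inl ⟨hTM hm, hx⟩
    · exact Or.inr ⟨m.2, Or.inr rfl, hr x hx⟩
  let f : DPair → DPair := fun p => (tilde p.1, tilde p.2)
  have hinj : Set.InjOn f T := by
    intro m hm m' hm' e
    by_contra hne
    exact hproj m hm m' hm' hne m.1 m'.1 (Or.inl rfl) (Or.inl rfl) (congrArg Prod.fst e)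
  have hroute : NodeDisjointRoutable (gridG ℓ) (T.image f) := by
    have hQ : ∀ q : {q // q ∈ T.image f}, ∃ w : (gridG ℓ).Walk q.1.1 q.1.2,
        w.IsPath ∧ ∃ m ∈ T, f m = q.1 ∧ ∀ x ∈ w.support, Ext m x := by
      rintro ⟨q, hq⟩
      obtain ⟨m, hm, rfl⟩ := Finset.mem_image.1 hq
      obtain ⟨w, hw, hwx⟩ := hwalk m hm
      exact ⟨w, hw, m, hm, rfl, hwx⟩
    choose Q hQp μ hμT hμ hQx using hQ
    refine ⟨Q, hQp, ?_⟩
    intro q q' hne x hx hx'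
    refine hExt (μ q) (hμT q) (μ q') (hμT q') (fun e => hne ?_) x (hQx q x hx) (hQx q' x hx')
    exact Subtype.ext (by rw [← hμ q, ← hμ q', e])
  have hfin := le_opt (Finset.image_subset_image (f := f) (hTM.trans hM')) hroute
  rw [Finset.card_image_of_injOn hinj] at hfin
  rw [← hcard]
  exact hTcard.trans (Nat.mul_le_mul_left _ hfin)

/-- Claim: relocating both sources (at distance ≤ δ from the boundary)
and destinations (at distance < 2d from the boundary) onto the boundary loses at most a
`(d+δ)` factor, up to a universal constant. -/
theorem statement15 :
    ∃ c : ℝ, 0 < c ∧ ∀ ℓ δ d : ℕ, 2 ≤ ℓ → 1 ≤ δ → 1 ≤ d →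
      ∀ M : Finset DPair,
        (∀ p ∈ M, InGrid ℓ p.1 ∧ InGrid ℓ p.2) →
        DistinctSources M → DistinctDests M →
        ∀ tilde : Vtx → Vtx,
          (∀ v : Vtx, ((∃ p ∈ M, p.1 = v) ∨ (∃ p ∈ M, p.2 = v)) →
            OnBoundary ℓ (tilde v) ∧
            ∀ b : Vtx, OnBoundary ℓ b →
              (gridG ℓ).dist v (tilde v) ≤ (gridG ℓ).dist v b) →
          (∀ p ∈ M, (gridG ℓ).dist p.1 (tilde p.1) ≤ δ) →
          (∀ p ∈ M, (gridG ℓ).dist p.2 (tilde p.2) < 2 * d) →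
          c * (OPTn (gridG ℓ) M : ℝ) / ((d : ℝ) + (δ : ℝ)) ≤
            (OPTn (gridG ℓ) (M.image (fun p => (tilde p.1, tilde p.2))) : ℝ) := by
  refine ⟨1 / 50, by norm_num, ?_⟩
  intro ℓ δ d _ hδ hd M hM _ _ tilde htilde hs ht
  have key := opt_le (D := δ + 2 * d) hM tilde
    (fun p hp => ⟨htilde p.1 (Or.inl ⟨p, hp, rfl⟩), htilde p.2 (Or.inr ⟨p, hp, rfl⟩)⟩)
    (fun p hp => ⟨by have := hs p hp; omega, by have := ht p hp; omega⟩)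
  set A := OPTn (gridG ℓ) M
  set A' := OPTn (gridG ℓ) (M.image (fun p => (tilde p.1, tilde p.2)))
  have h2 : A ≤ 50 * (d + δ) * A' := key.trans (Nat.mul_le_mul_right _ (by omega))
  have h3 : (A : ℝ) ≤ 50 * (d + δ) * A' := by exact_mod_cast h2
  have hpos : (0 : ℝ) < d + δ := by
    have : (1 : ℝ) ≤ d := by exact_mod_cast hd
    positivity
  rw [div_le_iff₀ hpos]
  linarith
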